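/- Let Q be a symmetric positive definite real d×d matrix, R a symmetric positive definite real m×m matrix, A a real d×d matrix, B a real d×m matrix, and Π a symmetric positive definite real d×d matrix solving the algebraic Riccati equation AᵀΠ + ΠA − ΠBR⁻¹BᵀΠ + Q = 0. Then the closed-loop matrix A − BR⁻¹BᵀΠ is Hurwitz: every eigenvalue μ ∈ ℂ of A − BR⁻¹BᵀΠ satisfies Re μ < 0. -/

import Mathlib

open Matrix

/-- If `Q ≻ 0`, `R ≻ 0` and the symmetric positive definite matrix `Π` solves
the algebraic Riccati equation `AᵀΠ + ΠA − ΠBR⁻¹BᵀΠ + Q = 0`, then the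
closed-loop matrix `A − BR⁻¹BᵀΠ` is Hurwitz: all its complex eigenvalues have
strictly negative real part. -/
theorem riccati_closed_loop_hurwitz {d m : ℕ}
    (A : Matrix (Fin d) (Fin d) ℝ) (B : Matrix (Fin d) (Fin m) ℝ)
    (Q P : Matrix (Fin d) (Fin d) ℝ) (R : Matrix (Fin m) (Fin m) ℝ)
    (hQ : Q.PosDef) (hR : R.PosDef) (hP : P.PosDef)
    (hARE : Aᵀ * P + P * A - P * B * R⁻¹ * Bᵀ * P + Q = 0)
    (μ : ℂ) (v : Fin d → ℂ) (hv : v ≠ 0)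
    (heig : ((A - B * R⁻¹ * Bᵀ * P).map (Complex.ofReal)).mulVec v = μ • v) :
    μ.re < 0 := by
  have hRi : (R⁻¹)ᵀ = R⁻¹ := by
    have := hR.inv.isHermitian
    simpa [Matrix.IsHermitian] using this
  have hPt : Pᵀ = P := by
    have := hP.isHermitian
    simpa [Matrix.IsHermitian] using this
  have hS : (P * B * R⁻¹ * Bᵀ * P).PosSemidef := by
    have h := hR.inv.posSemidef.mul_mul_conjTranspose_same (P * B)
    simpa [Matrix.transpose_mul, hPt, Matrix.mul_assoc] using h
  have hN := hQ.add_posSemidef hS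
  set F := A - B * R⁻¹ * Bᵀ * P with hF
  have hLyap : Fᵀ * P + P * F = -(Q + P * B * R⁻¹ * Bᵀ * P) := by
    have e : Fᵀ * P + P * F + (Q + P * B * R⁻¹ * Bᵀ * P) = 0 := by
      rw [← hARE, hF]
      simp only [Matrix.transpose_sub, Matrix.transpose_mul, Matrix.transpose_transpose, hPt, hRi,
        Matrix.sub_mul, Matrix.mul_sub, Matrix.mul_assoc]
      abel
    exact eq_neg_of_add_eq_zero_left e
  generalize Q + P * B * R⁻¹ * Bᵀ * P = N at hN hLyap
  clear_value F
  have hq : ∀ z : Fin d → ℝ, 2 * (z ⬝ᵥ (P *ᵥ (F *ᵥ z))) = -(z ⬝ᵥ (N *ᵥ z)) := by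
    intro z
    have h := congrArg (fun M => z ⬝ᵥ (M *ᵥ z)) hLyap
    simp only [Matrix.add_mulVec, Matrix.neg_mulVec, dotProduct_add, dotProduct_neg,
      ← Matrix.mulVec_mulVec] at h
    have h2 : z ⬝ᵥ (Fᵀ *ᵥ (P *ᵥ z)) = z ⬝ᵥ (P *ᵥ (F *ᵥ z)) := by
      rw [Matrix.dotProduct_mulVec, Matrix.vecMul_transpose, Matrix.dotProduct_mulVec z P,
        ← Matrix.mulVec_transpose, hPt, dotProduct_comm]
    rw [h2] at h
    linarith
  let x : Fin d → ℝ := fun i => (v i).re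
  let y : Fin d → ℝ := fun i => (v i).im
  have hx : F *ᵥ x = μ.re • x - μ.im • y := by
    ext i
    have h := congrArg Complex.re (congrFun heig i)
    simpa [Matrix.mulVec, dotProduct, x, y] using h
  have hy : F *ᵥ y = μ.re • y + μ.im • x := by
    ext i
    have h := congrArg Complex.im (congrFun heig i)
    simpa [Matrix.mulVec, dotProduct, x, y] using h
  have hxy : y ⬝ᵥ (P *ᵥ x) = x ⬝ᵥ (P *ᵥ y) := by
    rw [Matrix.dotProduct_mulVec, ← Matrix.mulVec_transpose, hPt, dotProduct_comm]
  have h1 := hq x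
  have h2 := hq y
  rw [hx] at h1
  rw [hy] at h2
  simp only [Matrix.mulVec_sub, Matrix.mulVec_add, Matrix.mulVec_smul, dotProduct_sub,
    dotProduct_add, dotProduct_smul, smul_eq_mul] at h1 h2
  rw [hxy] at h2
  have nn : ∀ {M : Matrix (Fin d) (Fin d) ℝ}, M.PosDef → ∀ z, 0 ≤ z ⬝ᵥ (M *ᵥ z) := by
    intro M hM z
    simpa using hM.posSemidef.dotProduct_mulVec_nonneg z
  have pp : ∀ {M : Matrix (Fin d) (Fin d) ℝ}, M.PosDef → ∀ z, z ≠ 0 → 0 < z ⬝ᵥ (M *ᵥ z) := by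
    intro M hM z hz
    simpa using hM.dotProduct_mulVec_pos hz
  have hne : x ≠ 0 ∨ y ≠ 0 := by
    by_contra hcon
    push Not at hcon
    apply hv
    ext i
    exact Complex.ext (congrFun hcon.1 i) (congrFun hcon.2 i)
  have key : ∀ {M : Matrix (Fin d) (Fin d) ℝ}, M.PosDef →
      0 < x ⬝ᵥ (M *ᵥ x) + y ⬝ᵥ (M *ᵥ y) := by
    intro M hM
    rcases hne with h | h
    · exact add_pos_of_pos_of_nonneg (pp hM x h) (nn hM y)
    · exact add_pos_of_nonneg_of_pos (nn hM x) (pp hM y h)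
  have kP := key hP
  have kN := key hN
  by_contra hcon
  have := mul_nonneg (not_lt.mp hcon) kP.le
  linarith
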